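/- Let M(1),…,M(n) be an n-outcome POVM on ℂ^d ⊗ ℂ^k, let ξ₁, ξ₂ be density matrices on ℂ^k, let E₁, E₂ be n-outcome POVMs on ℂ^d programmed by ξ₁ and ξ₂ respectively, i.e., Tr[E_j(i)ρ] = Tr[M(i)(ρ ⊗ ξ_j)] for every density matrix ρ on ℂ^d, every outcome i, and j = 1,2, and let λ₁, λ₂ be post-processings from n outcomes to m outcomes. If λ₁⋆E₁ and λ₂⋆E₂ are both PVMs and λ₁⋆E₁ ≠ λ₂⋆E₂, then F(ξ₁,ξ₂)·F(λ₁,λ₂) = 0. -/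

import Mathlib

open scoped BigOperators Kronecker ComplexOrder Matrix

noncomputable section


namespace QProg

/-- The positive-semidefinite square root of a matrix, extended by `0` to all matrices. -/
noncomputable def matSqrt {α : Type*} [Fintype α] [DecidableEq α]
    (A : Matrix α α ℂ) : Matrix α α ℂ :=
  @dite _ A.PosSemidef (Classical.propDecidable _) (fun h =>
    (h.1.eigenvectorUnitary : Matrix α α ℂ) *
      Matrix.diagonal (Complex.ofReal ∘ Real.sqrt ∘ h.1.eigenvalues) *
      (star h.1.eigenvectorUnitary : Matrix α α ℂ)) (fun _ => 0)

/-- The fidelity `F(ρ,σ) = Tr √(√ρ σ √ρ)` of two (density) matrices. -/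
noncomputable def fid {α : Type*} [Fintype α] [DecidableEq α]
    (ρ σ : Matrix α α ℂ) : ℝ :=
  ((matSqrt (matSqrt ρ * σ * matSqrt ρ)).trace).re

/-- A density matrix: positive semidefinite with unit trace. -/
def IsDensity {α : Type*} [Fintype α] [DecidableEq α] (ρ : Matrix α α ℂ) : Prop :=
  ρ.PosSemidef ∧ ρ.trace = 1

/-- An `n`-outcome POVM: positive semidefinite effects summing to the identity. -/
def IsPOVM {α : Type*} [Fintype α] [DecidableEq α] {n : ℕ}
    (E : Fin n → Matrix α α ℂ) : Prop :=
  (∀ i, (E i).PosSemidef) ∧ ∑ i, E i = 1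

/-- The outcome distribution `p^E_ρ(i) = Tr[E(i) ρ]`. -/
noncomputable def outDist {α : Type*} [Fintype α] [DecidableEq α] {n : ℕ}
    (E : Fin n → Matrix α α ℂ) (ρ : Matrix α α ℂ) (i : Fin n) : ℝ :=
  ((E i * ρ).trace).re

/-- The Bhattacharyya coefficient `B(p,q) = ∑ᵢ √(p i) √(q i)`. -/
noncomputable def bhat {n : ℕ} (p q : Fin n → ℝ) : ℝ :=
  ∑ i, Real.sqrt (p i) * Real.sqrt (q i)

/-- `B(E₁,E₂)`: infimum of `B(p^{E₁}_{ρ₁}, p^{E₂}_{ρ₂}) / F(ρ₁,ρ₂)` over pairs of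
density matrices with nonvanishing fidelity. -/
noncomputable def obsB {α : Type*} [Fintype α] [DecidableEq α] {n : ℕ}
    (E₁ E₂ : Fin n → Matrix α α ℂ) : ℝ :=
  sInf { r : ℝ | ∃ ρ₁ ρ₂ : Matrix α α ℂ, IsDensity ρ₁ ∧ IsDensity ρ₂ ∧
    fid ρ₁ ρ₂ ≠ 0 ∧ r = bhat (outDist E₁ ρ₁) (outDist E₂ ρ₂) / fid ρ₁ ρ₂ }

/-- A post-processing from `n` outcomes to `m` outcomes. -/
def IsPostProc {n m : ℕ} (lam : Fin n → Fin m → ℝ) : Prop :=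
  (∀ i y, 0 ≤ lam i y) ∧ ∀ i, ∑ y, lam i y = 1

/-- The action `(λ⋆E)(y) = ∑ᵢ λ(i|y) E(i)` of a post-processing on a POVM. -/
noncomputable def ppStar {α : Type*} [Fintype α] [DecidableEq α] {n m : ℕ}
    (lam : Fin n → Fin m → ℝ) (E : Fin n → Matrix α α ℂ) (y : Fin m) :
    Matrix α α ℂ :=
  ∑ i, (lam i y : ℂ) • E i

/-- The action `(λ⋆p)(y) = ∑ᵢ λ(i|y) p(i)` of a post-processing on a probability vector. -/
noncomputable def ppStarVec {n m : ℕ} (lam : Fin n → Fin m → ℝ) (p : Fin n → ℝ)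
    (y : Fin m) : ℝ :=
  ∑ i, lam i y * p i

/-- A probability vector on `{1,…,n}`. -/
def IsProbVec {n : ℕ} (p : Fin n → ℝ) : Prop :=
  (∀ i, 0 ≤ p i) ∧ ∑ i, p i = 1

/-- `F(λ₁,λ₂)`: infimum of `B(λ₁⋆p, λ₂⋆p)` over probability vectors `p`. -/
noncomputable def ppF {n m : ℕ} (lam₁ lam₂ : Fin n → Fin m → ℝ) : ℝ :=
  sInf { r : ℝ | ∃ p : Fin n → ℝ, IsProbVec p ∧
    r = bhat (ppStarVec lam₁ p) (ppStarVec lam₂ p) }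

/-- A PVM (sharp observable): a POVM all of whose effects are projections. -/
def IsPVM {α : Type*} [Fintype α] [DecidableEq α] {n : ℕ}
    (E : Fin n → Matrix α α ℂ) : Prop :=
  IsPOVM E ∧ ∀ i, E i * E i = E i

/-!
A sharp observable `λ⋆E` yields `y` with certainty on its own effect `S(y)`, viewed as an
unnormalized state; hence `E(i) S(y) ≠ 0` forces `λ(i|y) = 1`. Two different sharp observables have
effects `S(y)` and `T(z)` with `y ≠ z` and `S(y) T(z) ≠ 0`. If some `i` has `E₁(i) S(y) ≠ 0` and
`E₂(i) T(z) ≠ 0`, then `λ₁(i|·)` and `λ₂(i|·)` are point masses at different outcomes. Otherwise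
every `M(i)` annihilates `S(y) ⊗ ξ₁` or `T(z) ⊗ ξ₂`, so inserting `∑ᵢ M(i) = I` between these two
gives `S(y) T(z) ⊗ ξ₁ ξ₂ = 0`, that is `ξ₁ ξ₂ = 0`.
-/

theorem exists_ne_mul_ne_zero_of_sum_eq_one {ι R : Type*} [Fintype ι] [NonAssocSemiring R]
    {a b : ι → R} (ha : ∑ i, a i = 1) (hb : ∑ i, b i = 1) (hab : a ≠ b) :
    ∃ i j, i ≠ j ∧ a i * b j ≠ 0 := by
  by_contra! h_zero
  refine hab (funext fun i => ?_)
  calc a i = ∑ j, a i * b j := by rw [← Finset.mul_sum, hb, mul_one]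
    _ = a i * b i := Fintype.sum_eq_single i fun j hj => h_zero i j hj.symm
    _ = ∑ j, a j * b i := (Fintype.sum_eq_single i fun j hj => h_zero j i hj).symm
    _ = b i := by rw [← Finset.sum_mul, ha, one_mul]

theorem kronecker_eq_zero_iff {l m n p R : Type*} [MulZeroClass R] [NoZeroDivisors R]
    {A : Matrix l m R} {B : Matrix n p R} : A ⊗ₖ B = 0 ↔ A = 0 ∨ B = 0 := by
  refine ⟨fun h => ?_, ?_⟩
  · by_contra! h_ne
    obtain ⟨⟨i, j, hA⟩, ⟨k, q, hB⟩⟩ :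
        (∃ i j, A i j ≠ 0) ∧ ∃ k q, B k q ≠ 0 := by
      simpa only [ne_eq, ← Matrix.ext_iff, Matrix.zero_apply, not_forall] using h_ne
    exact mul_ne_zero hA hB (congr_fun₂ h (i, k) (j, q))
  · rintro (rfl | rfl)
    · exact Matrix.zero_kronecker B
    · exact Matrix.kronecker_zero A

section PosSemidef

open scoped MatrixOrder

variable {𝕜 α : Type*} [RCLike 𝕜] [Fintype α] {A B : Matrix α α 𝕜}

theorem posSemidef_exists_eq_conjTranspose_mul_self (hA : A.PosSemidef) :
    ∃ X : Matrix α α 𝕜, A = Xᴴ * X := by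
  classical exact CStarAlgebra.nonneg_iff_eq_star_mul_self.mp hA.nonneg

theorem posSemidef_trace_mul_nonneg (hA : A.PosSemidef) (hB : B.PosSemidef) :
    0 ≤ (A * B).trace := by
  obtain ⟨X, rfl⟩ := posSemidef_exists_eq_conjTranspose_mul_self hA
  rw [Matrix.mul_assoc, Matrix.trace_mul_comm]
  exact (hB.mul_mul_conjTranspose_same X).trace_nonneg

theorem posSemidef_trace_mul_eq_zero_iff (hA : A.PosSemidef) (hB : B.PosSemidef) :
    (A * B).trace = 0 ↔ A * B = 0 := by
  refine ⟨fun h => ?_, fun h => by rw [h, Matrix.trace_zero]⟩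
  obtain ⟨X, rfl⟩ := posSemidef_exists_eq_conjTranspose_mul_self hA
  obtain ⟨Y, rfl⟩ := posSemidef_exists_eq_conjTranspose_mul_self hB
  have h_norm : (Xᴴ * X * (Yᴴ * Y)).trace = ((X * Yᴴ) * (X * Yᴴ)ᴴ).trace := by
    rw [Matrix.mul_assoc, Matrix.trace_mul_comm, Matrix.conjTranspose_mul,
      Matrix.conjTranspose_conjTranspose]
    simp only [Matrix.mul_assoc]
  rw [h_norm, Matrix.trace_mul_conjTranspose_self_eq_zero_iff] at h
  calc Xᴴ * X * (Yᴴ * Y) = Xᴴ * (X * Yᴴ) * Y := by simp only [Matrix.mul_assoc]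
    _ = 0 := by rw [h, Matrix.mul_zero, Matrix.zero_mul]

end PosSemidef

section Fidelity

open scoped MatrixOrder

variable {α : Type*} [Fintype α] [DecidableEq α] {ρ σ : Matrix α α ℂ}

theorem matSqrt_eq_sqrt (hρ : ρ.PosSemidef) : matSqrt ρ = CFC.sqrt ρ := by
  rw [CFC.sqrt_eq_real_sqrt ρ hρ.nonneg, cfcₙ_eq_cfc, hρ.1.cfc_eq, matSqrt, dif_pos hρ]
  rfl

theorem matSqrt_mul_eq_zero (hρ : ρ.PosSemidef) (h : ρ * σ = 0) : matSqrt ρ * σ = 0 := by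
  have h_adj : (CFC.sqrt ρ)ᴴ = CFC.sqrt ρ := (CFC.sqrt_nonneg ρ).isSelfAdjoint
  rw [matSqrt_eq_sqrt hρ, ← Matrix.conjTranspose_mul_self_mul_eq_zero, h_adj,
    CFC.sqrt_mul_sqrt_self ρ hρ.nonneg, h]

theorem fid_eq_zero_of_mul_eq_zero (hρ : ρ.PosSemidef) (h : ρ * σ = 0) : fid ρ σ = 0 := by
  rw [fid, matSqrt_mul_eq_zero hρ h, Matrix.zero_mul, matSqrt_eq_sqrt .zero, CFC.sqrt_zero,
    Matrix.trace_zero, Complex.zero_re]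

end Fidelity

section PostProcessing

variable {n m : ℕ} {lam lam₁ lam₂ : Fin n → Fin m → ℝ} {i : Fin n} {y z : Fin m}

theorem bhat_nonneg (p q : Fin n → ℝ) : 0 ≤ bhat p q :=
  Finset.sum_nonneg fun _ _ => by positivity

theorem bhat_eq_zero_of_disjoint {p q : Fin n → ℝ} (h : ∀ i, p i = 0 ∨ q i = 0) :
    bhat p q = 0 :=
  Finset.sum_eq_zero fun i _ => by rcases h i with h | h <;> simp [h]

theorem isProbVec_single (i : Fin n) : IsProbVec (Pi.single i 1) :=
  single_mem_stdSimplex ℝ i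

theorem ppStarVec_single (lam : Fin n → Fin m → ℝ) (i : Fin n) :
    ppStarVec lam (Pi.single i 1) = lam i := by
  ext y
  simp [ppStarVec, Pi.single_apply]

theorem ppF_nonneg (lam₁ lam₂ : Fin n → Fin m → ℝ) : 0 ≤ ppF lam₁ lam₂ :=
  Real.sInf_nonneg <| by
    rintro _ ⟨p, -, rfl⟩
    exact bhat_nonneg _ _

theorem ppF_le_bhat {p : Fin n → ℝ} (hp : IsProbVec p) :
    ppF lam₁ lam₂ ≤ bhat (ppStarVec lam₁ p) (ppStarVec lam₂ p) := by
  refine csInf_le ⟨0, ?_⟩ ⟨p, hp, rfl⟩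
  rintro _ ⟨q, -, rfl⟩
  exact bhat_nonneg _ _

theorem ppF_eq_zero_of_disjoint (h : ∀ y, lam₁ i y = 0 ∨ lam₂ i y = 0) : ppF lam₁ lam₂ = 0 := by
  refine le_antisymm ?_ (ppF_nonneg _ _)
  calc ppF lam₁ lam₂ ≤ bhat (lam₁ i) (lam₂ i) := by
        simpa only [ppStarVec_single] using ppF_le_bhat (isProbVec_single i)
    _ = 0 := bhat_eq_zero_of_disjoint h

theorem IsPostProc.le_one (hlam : IsPostProc lam) (i : Fin n) (y : Fin m) : lam i y ≤ 1 :=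
  (Finset.single_le_sum (fun z _ => hlam.1 i z) (Finset.mem_univ y)).trans_eq (hlam.2 i)

theorem IsPostProc.eq_zero_of_eq_one (hlam : IsPostProc lam) (hy : lam i y = 1) (hzy : z ≠ y) :
    lam i z = 0 := by
  have h_pair : lam i y + lam i z ≤ 1 := by
    rw [← hlam.2 i, ← Finset.sum_pair hzy.symm]
    exact Finset.sum_le_univ_sum_of_nonneg (hlam.1 i)
  linarith [hlam.1 i z]

theorem IsPostProc.disjoint_of_eq_one (hlam₁ : IsPostProc lam₁) (hlam₂ : IsPostProc lam₂)
    (hyz : y ≠ z) (hy : lam₁ i y = 1) (hz : lam₂ i z = 1) (w : Fin m) :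
    lam₁ i w = 0 ∨ lam₂ i w = 0 := by
  rcases eq_or_ne w y with rfl | hwy
  · exact .inr (hlam₂.eq_zero_of_eq_one hz hyz)
  · exact .inl (hlam₁.eq_zero_of_eq_one hy hwy)

end PostProcessing

section Observables

variable {α β : Type*} [Fintype α] [DecidableEq α] [Fintype β] {n m : ℕ}

theorem IsPOVM.mul_eq_zero {E : Fin n → Matrix α α ℂ} (hE : IsPOVM E) {P Q : Matrix α α ℂ}
    (hP : P.IsHermitian) (h : ∀ i, E i * P = 0 ∨ E i * Q = 0) : P * Q = 0 := by
  have h_insert (i : Fin n) : P * E i * Q = 0 := by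
    rcases h i with h_left | h_right
    · have h_adj : P * E i = 0 := by
        simpa only [Matrix.conjTranspose_mul, hP.eq, (hE.1 i).1.eq, Matrix.conjTranspose_zero]
          using congr_arg Matrix.conjTranspose h_left
      rw [h_adj, Matrix.zero_mul]
    · rw [Matrix.mul_assoc, h_right, Matrix.mul_zero]
  calc P * Q = ∑ i, P * E i * Q := by
        rw [← Finset.sum_mul, ← Finset.mul_sum, hE.2, Matrix.mul_one]
    _ = 0 := Finset.sum_eq_zero fun i _ => h_insert i

theorem IsPVM.eq_one_of_mul_ne_zero {E : Fin n → Matrix α α ℂ} {lam : Fin n → Fin m → ℝ}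
    (hsharp : IsPVM (ppStar lam E)) (hE : IsPOVM E) (hlam : IsPostProc lam) {i : Fin n} {y : Fin m}
    (h : E i * ppStar lam E y ≠ 0) : lam i y = 1 := by
  set S := ppStar lam E y with hS
  have hS_psd : S.PosSemidef := hsharp.1.1 y
  have h_compl : ∑ j, ((1 - lam j y : ℝ) : ℂ) • E j = 1 - S := by
    simp only [Complex.ofReal_sub, Complex.ofReal_one, sub_smul, one_smul, Finset.sum_sub_distrib,
      hE.2, hS, ppStar]
  have h_sum : ∑ j, ((1 - lam j y : ℝ) : ℂ) * (E j * S).trace = 0 := by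
    calc ∑ j, ((1 - lam j y : ℝ) : ℂ) * (E j * S).trace
        = ((∑ j, ((1 - lam j y : ℝ) : ℂ) • E j) * S).trace := by
          simp only [Finset.sum_mul, Matrix.trace_sum, Matrix.smul_mul, Matrix.trace_smul,
            smul_eq_mul]
      _ = 0 := by
          rw [h_compl, Matrix.sub_mul, Matrix.one_mul, hsharp.2 y, sub_self, Matrix.trace_zero]
  have h_nonneg (j : Fin n) : 0 ≤ ((1 - lam j y : ℝ) : ℂ) * (E j * S).trace :=
    mul_nonneg (Complex.zero_le_real.mpr (sub_nonneg.mpr (hlam.le_one j y)))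
      (posSemidef_trace_mul_nonneg (hE.1 j) hS_psd)
  have h_trace : (E i * S).trace ≠ 0 := (posSemidef_trace_mul_eq_zero_iff (hE.1 i) hS_psd).not.mpr h
  have h_term : ((1 - lam i y : ℝ) : ℂ) * (E i * S).trace = 0 :=
    congr_fun ((Fintype.sum_eq_zero_iff_of_nonneg h_nonneg).mp h_sum) i
  have h_weight : 1 - lam i y = 0 :=
    Complex.ofReal_eq_zero.mp ((mul_eq_zero.mp h_term).resolve_right h_trace)
  linarith

/-- The matrix `ξ`, used as a programming state, turns the multimeter `M` on the composite system
into `E`: `Tr[E(i)ρ] = Tr[M(i)(ρ ⊗ ξ)]` for every density matrix `ρ`. -/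
def Programs (M : Fin n → Matrix (α × β) (α × β) ℂ) (ξ : Matrix β β ℂ)
    (E : Fin n → Matrix α α ℂ) : Prop :=
  ∀ ρ : Matrix α α ℂ, IsDensity ρ → ∀ i, (E i * ρ).trace = (M i * (ρ ⊗ₖ ξ)).trace

variable {M : Fin n → Matrix (α × β) (α × β) ℂ}

theorem Programs.trace_eq_of_posSemidef {ξ : Matrix β β ℂ} {E : Fin n → Matrix α α ℂ}
    (h : Programs M ξ E) {ρ : Matrix α α ℂ} (hρ : ρ.PosSemidef) (i : Fin n) :
    (E i * ρ).trace = (M i * (ρ ⊗ₖ ξ)).trace := by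
  rcases eq_or_ne ρ.trace 0 with h_trace | h_trace
  · rw [hρ.trace_eq_zero_iff.mp h_trace]
    simp
  · have h_density : IsDensity (ρ.trace⁻¹ • ρ) :=
      ⟨hρ.smul (inv_nonneg.mpr hρ.trace_nonneg), by
        rw [Matrix.trace_smul, smul_eq_mul, inv_mul_cancel₀ h_trace]⟩
    have h_scaled := h _ h_density i
    simp only [Matrix.smul_kronecker, Matrix.mul_smul, Matrix.trace_smul] at h_scaled
    exact smul_right_injective ℂ (inv_ne_zero h_trace) h_scaled

theorem Programs.mul_kronecker_eq_zero {ξ : Matrix β β ℂ} {E : Fin n → Matrix α α ℂ}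
    (h : Programs M ξ E) {i : Fin n} (hM : (M i).PosSemidef) (hξ : ξ.PosSemidef)
    {ρ : Matrix α α ℂ} (hρ : ρ.PosSemidef) (hEρ : E i * ρ = 0) : M i * (ρ ⊗ₖ ξ) = 0 := by
  rw [← posSemidef_trace_mul_eq_zero_iff hM (hρ.kronecker hξ),
    ← h.trace_eq_of_posSemidef hρ, hEρ, Matrix.trace_zero]

variable [DecidableEq β]

theorem Programs.kronecker_mul_eq_zero {ξ₁ ξ₂ : Matrix β β ℂ} {E₁ E₂ : Fin n → Matrix α α ℂ}
    (h₁ : Programs M ξ₁ E₁) (h₂ : Programs M ξ₂ E₂) (hM : IsPOVM M)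
    (hξ₁ : ξ₁.PosSemidef) (hξ₂ : ξ₂.PosSemidef) {ρ₁ ρ₂ : Matrix α α ℂ}
    (hρ₁ : ρ₁.PosSemidef) (hρ₂ : ρ₂.PosSemidef) (h : ∀ i, E₁ i * ρ₁ = 0 ∨ E₂ i * ρ₂ = 0) :
    (ρ₁ * ρ₂) ⊗ₖ (ξ₁ * ξ₂) = 0 := by
  rw [Matrix.mul_kronecker_mul]
  exact hM.mul_eq_zero (hρ₁.kronecker hξ₁).1 fun i =>
    (h i).imp (h₁.mul_kronecker_eq_zero (hM.1 i) hξ₁ hρ₁)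
      (h₂.mul_kronecker_eq_zero (hM.1 i) hξ₂ hρ₂)

theorem sharp_postprocessing_no_go_general {ξ₁ ξ₂ : Matrix β β ℂ} {E₁ E₂ : Fin n → Matrix α α ℂ}
    {lam₁ lam₂ : Fin n → Fin m → ℝ} (hM : IsPOVM M) (hξ₁ : ξ₁.PosSemidef) (hξ₂ : ξ₂.PosSemidef)
    (hE₁ : IsPOVM E₁) (hE₂ : IsPOVM E₂) (hprog₁ : Programs M ξ₁ E₁) (hprog₂ : Programs M ξ₂ E₂)
    (hlam₁ : IsPostProc lam₁) (hlam₂ : IsPostProc lam₂)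
    (hsharp₁ : IsPVM (ppStar lam₁ E₁)) (hsharp₂ : IsPVM (ppStar lam₂ E₂))
    (hne : ppStar lam₁ E₁ ≠ ppStar lam₂ E₂) :
    ξ₁ * ξ₂ = 0 ∨ ∃ i, ∀ y, lam₁ i y = 0 ∨ lam₂ i y = 0 := by
  obtain ⟨y, z, hyz, h_overlap⟩ :=
    exists_ne_mul_ne_zero_of_sum_eq_one hsharp₁.1.2 hsharp₂.1.2 hne
  by_cases h_common : ∃ i, E₁ i * ppStar lam₁ E₁ y ≠ 0 ∧ E₂ i * ppStar lam₂ E₂ z ≠ 0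
  · obtain ⟨i, hi₁, hi₂⟩ := h_common
    exact .inr ⟨i, hlam₁.disjoint_of_eq_one hlam₂ hyz
      (hsharp₁.eq_one_of_mul_ne_zero hE₁ hlam₁ hi₁) (hsharp₂.eq_one_of_mul_ne_zero hE₂ hlam₂ hi₂)⟩
  · simp only [not_exists, not_and_or, not_not] at h_common
    have h_kron := hprog₁.kronecker_mul_eq_zero hprog₂ hM hξ₁ hξ₂ (hsharp₁.1.1 y) (hsharp₂.1.1 z)
      h_common
    exact .inl ((kronecker_eq_zero_iff.mp h_kron).resolve_left h_overlap)

end Observables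

/-- realizing two different sharp observables by post-processing assisted
programming forces `F(ξ₁,ξ₂) F(λ₁,λ₂) = 0`. -/
theorem sharp_postprocessing_no_go {d k n m : ℕ}
    (M : Fin n → Matrix (Fin d × Fin k) (Fin d × Fin k) ℂ) (hM : IsPOVM M)
    (ξ₁ ξ₂ : Matrix (Fin k) (Fin k) ℂ) (hξ₁ : IsDensity ξ₁) (hξ₂ : IsDensity ξ₂)
    (E₁ E₂ : Fin n → Matrix (Fin d) (Fin d) ℂ) (hE₁ : IsPOVM E₁) (hE₂ : IsPOVM E₂)
    (hprog₁ : ∀ ρ : Matrix (Fin d) (Fin d) ℂ, IsDensity ρ →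
      ∀ i, (E₁ i * ρ).trace = (M i * (ρ ⊗ₖ ξ₁)).trace)
    (hprog₂ : ∀ ρ : Matrix (Fin d) (Fin d) ℂ, IsDensity ρ →
      ∀ i, (E₂ i * ρ).trace = (M i * (ρ ⊗ₖ ξ₂)).trace)
    (lam₁ lam₂ : Fin n → Fin m → ℝ) (hlam₁ : IsPostProc lam₁) (hlam₂ : IsPostProc lam₂)
    (hsharp₁ : IsPVM (ppStar lam₁ E₁)) (hsharp₂ : IsPVM (ppStar lam₂ E₂))
    (hne : ppStar lam₁ E₁ ≠ ppStar lam₂ E₂) :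
    fid ξ₁ ξ₂ * ppF lam₁ lam₂ = 0 := by
  rcases sharp_postprocessing_no_go_general hM hξ₁.1 hξ₂.1 hE₁ hE₂ hprog₁ hprog₂ hlam₁ hlam₂
      hsharp₁ hsharp₂ hne with h_orth | ⟨_, h_disjoint⟩
  · rw [fid_eq_zero_of_mul_eq_zero hξ₁.1 h_orth, zero_mul]
  · rw [ppF_eq_zero_of_disjoint h_disjoint, mul_zero]

end QProg
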